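/- arXiv:1205.6530 — 2 statements merged into one kernel-verified Lean document; each statement's English description precedes it below -/
import Mathlib

section
/- Let M be a closed linear subspace of L²(𝕋^r, H). The following are equivalent: (i) for every a ∈ M, every m ∈ ℤ^r and every k ∈ K, both e_m·a ∈ M and Ũ_k a ∈ M; (ii) there exists a measurable range function J, unique up to equality a.e., such that M = M_J and for each k ∈ K, U_k(σ)(J(σ)) ⊆ J(σ) for a.e. σ ∈ 𝕋^r. -/
open MeasureTheory
open scoped ENNReal NNReal

noncomputable section

/-- The unit cube `[0,1)^r` in `ℝ^r`. -/
def cube (r : ℕ) : Set (Fin r → ℝ) := Set.univ.pi fun _ => Set.Ico (0 : ℝ) 1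

/-- Lebesgue measure on the torus `𝕋^r`, identified with the cube `[0,1)^r`. -/
def torusMeasure (r : ℕ) : Measure (Fin r → ℝ) := volume.restrict (cube r)

/-- The character `e_m(σ) = exp(2πi⟨m,σ⟩)` on `𝕋^r`. -/
def char {r : ℕ} (m : Fin r → ℤ) (σ : Fin r → ℝ) : ℂ :=
  Complex.exp (2 * (Real.pi : ℂ) * Complex.I * ∑ j, (m j : ℂ) * (σ j : ℂ))

lemma char_eq_mFourier {r : ℕ} (m : Fin r → ℤ) (σ : Fin r → ℝ) :
    UnitAddTorus.mFourier m (fun i => (σ i : UnitAddCircle)) = char m σ := by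
  simp only [UnitAddTorus.mFourier, ContinuousMap.coe_mk, fourier_coe_apply, char]
  rw [← Complex.exp_sum, Finset.mul_sum]
  congr 1
  refine Finset.sum_congr rfl fun i _ => ?_
  simp
  ring

lemma norm_char {r : ℕ} (m : Fin r → ℤ) (σ : Fin r → ℝ) : ‖char m σ‖ = 1 := by
  have : char m σ = Complex.exp (((2 * Real.pi * ∑ j, (m j : ℝ) * σ j : ℝ) : ℂ) * Complex.I) := by
    rw [char]; push_cast; ring_nf
  rw [this, Complex.norm_exp_ofReal_mul_I]

lemma continuous_char {r : ℕ} (m : Fin r → ℤ) : Continuous (char m) := by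
  unfold char; fun_prop

lemma conj_char {r : ℕ} (m : Fin r → ℤ) (σ : Fin r → ℝ) :
    (starRingEnd ℂ) (char m σ) = char (-m) σ := by
  rw [← char_eq_mFourier, ← char_eq_mFourier, UnitAddTorus.mFourier_neg]

instance torus_finite (r : ℕ) : IsFiniteMeasure (torusMeasure r) := by
  constructor
  have : cube r ⊆ Set.Icc 0 1 := by
    intro x hx
    exact ⟨fun i => (hx i trivial).1, fun i => (hx i trivial).2.le⟩
  rw [torusMeasure, Measure.restrict_apply_univ]
  exact (measure_mono this).trans_lt isCompact_Icc.measure_lt_top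

lemma measurableSet_cube (r : ℕ) : MeasurableSet (cube r) :=
  MeasurableSet.univ_pi fun _ => measurableSet_Ico

lemma measure_ext_torus {r : ℕ} (ν₁ ν₂ : Measure (Fin r → ℝ)) [IsFiniteMeasure ν₁]
    [IsFiniteMeasure ν₂] (h₁ : ν₁ (cube r)ᶜ = 0) (h₂ : ν₂ (cube r)ᶜ = 0)
    (h : ∀ m : Fin r → ℤ, ∫ σ, char m σ ∂ν₁ = ∫ σ, char m σ ∂ν₂) : ν₁ = ν₂ := by
  let q : (Fin r → ℝ) → (Fin r → UnitAddCircle) := fun σ i => (σ i : UnitAddCircle)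
  have hq : Continuous q := by
    refine continuous_pi fun i => ?_
    exact (AddCircle.continuous_mk' 1).comp (continuous_apply i)
  have key : ν₁.map q = ν₂.map q := by
    refine ext_of_forall_mem_subalgebra_integral_eq_of_pseudoEMetric_complete_countable (𝕜 := ℂ)
      (A := (UnitAddTorus.mFourierSubalgebra (Fin r)).comap
        (BoundedContinuousFunction.toContinuousMapStarₐ ℂ)) ?_ ?_
    · intro x y hxy
      obtain ⟨f, ⟨g, hg, rfl⟩, hne⟩ := UnitAddTorus.mFourierSubalgebra_separatesPoints hxy
      refine ⟨g, ⟨g, ⟨BoundedContinuousFunction.mkOfCompact g, ?_, rfl⟩, rfl⟩, hne⟩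
      exact hg
    · intro g hg
      have hg' : (g : C(Fin r → UnitAddCircle, ℂ)) ∈
          Submodule.span ℂ (Set.range (UnitAddTorus.mFourier (d := Fin r))) := by
        rw [← UnitAddTorus.mFourierSubalgebra_coe]; exact hg
      have main : ∀ G : C(Fin r → UnitAddCircle, ℂ),
          G ∈ Submodule.span ℂ (Set.range (UnitAddTorus.mFourier (d := Fin r))) →
          ∫ x, G x ∂(ν₁.map q) = ∫ x, G x ∂(ν₂.map q) := by
        have hInt : ∀ (ν : Measure (Fin r → UnitAddCircle)) [IsFiniteMeasure ν]
            (G : C(Fin r → UnitAddCircle, ℂ)), Integrable G ν := by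
          intro ν _ G
          exact (BoundedContinuousFunction.mkOfCompact G).integrable ν
        intro G hG
        induction hG using Submodule.span_induction with
        | mem x hx =>
          obtain ⟨m, rfl⟩ := hx
          rw [integral_map hq.aemeasurable (ContinuousMap.continuous _).aestronglyMeasurable,
            integral_map hq.aemeasurable (ContinuousMap.continuous _).aestronglyMeasurable]
          simpa only [q, char_eq_mFourier] using h m
        | zero => simp
        | add x y _ _ hx hy =>
          simp only [ContinuousMap.add_apply]
          rw [integral_add (hInt _ x) (hInt _ y), integral_add (hInt _ x) (hInt _ y), hx, hy]
        | smul c x _ hx =>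
          simp only [ContinuousMap.smul_apply]
          rw [integral_smul, integral_smul, hx]
      exact main _ hg'
  have : Fact ((0:ℝ) < 1) := ⟨one_pos⟩
  ext S hS
  let F : Set (Fin r → UnitAddCircle) :=
    {x | (fun i => ((AddCircle.measurableEquivIco 1 0 (x i) : Set.Ico (0:ℝ) (0+1)) : ℝ)) ∈ S}
  have hF : MeasurableSet F := by
    refine (measurable_pi_lambda _ fun i => ?_) hS
    exact measurable_subtype_coe.comp
      ((AddCircle.measurableEquivIco 1 0).measurable.comp (measurable_pi_apply i))
  have hFS : q ⁻¹' F ∩ cube r = S ∩ cube r := by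
    ext σ
    simp only [Set.mem_inter_iff, and_congr_left_iff]
    intro hσ
    have : (fun i => ((AddCircle.measurableEquivIco 1 0 (q σ i) : Set.Ico (0:ℝ) (0+1)) : ℝ)) = σ := by
      funext i
      have hi : σ i ∈ Set.Ico (0:ℝ) (0+1) := by simpa using hσ i trivial
      exact congrArg Subtype.val (AddCircle.equivIco_coe_eq hi)
    simp only [F, Set.mem_preimage, Set.mem_ofPred_eq, this]
  have hc : ∀ ν : Measure (Fin r → ℝ), ν (cube r)ᶜ = 0 → ν S = ν.map q F := by
    intro ν hν
    rw [Measure.map_apply hq.measurable hF, ← measure_inter_add_sdiff S (measurableSet_cube r),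
      ← measure_inter_add_sdiff (q ⁻¹' F) (measurableSet_cube r), hFS]
    congr 1
    rw [measure_mono_null (fun x hx => hx.2) hν, measure_mono_null (fun x hx => hx.2) hν]
  rw [hc _ h₁, hc _ h₂, key]

lemma real_fourier_zero {r : ℕ} (f : (Fin r → ℝ) → ℝ) (hf : Measurable f)
    (hfi : Integrable f (torusMeasure r))
    (h : ∀ m : Fin r → ℤ, ∫ σ, char m σ * (f σ : ℂ) ∂(torusMeasure r) = 0) :
    f =ᵐ[torusMeasure r] 0 := by
  have hmeas : ∀ g : (Fin r → ℝ) → ℝ, Measurable g → 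
      Measurable (fun σ => Real.toNNReal (g σ)) := fun g hg => hg.real_toNNReal
  have hfin : ∀ g : (Fin r → ℝ) → ℝ, Integrable g (torusMeasure r) → 
      IsFiniteMeasure ((torusMeasure r).withDensity (fun σ => (Real.toNNReal (g σ) : ℝ≥0∞))) := by
    intro g hg
    exact isFiniteMeasure_withDensity_ofReal hg.2
  have := hfin f hfi
  have := hfin _ hfi.neg
  have hcube : (torusMeasure r) (cube r)ᶜ = 0 := by
    rw [torusMeasure, Measure.restrict_apply (measurableSet_cube r).compl]; simp
  have key := measure_ext_torus
    ((torusMeasure r).withDensity (fun σ => (Real.toNNReal (f σ) : ℝ≥0∞)))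
    ((torusMeasure r).withDensity (fun σ => (Real.toNNReal ((-f) σ) : ℝ≥0∞)))
    (withDensity_absolutelyContinuous _ _ hcube) (withDensity_absolutelyContinuous _ _ hcube) ?_
  · rw [withDensity_eq_iff_of_sigmaFinite (hmeas _ hf).coe_nnreal_ennreal.aemeasurable
      (hmeas _ hf.neg).coe_nnreal_ennreal.aemeasurable] at key
    filter_upwards [key] with σ hσ
    have h1 : Real.toNNReal (f σ) = Real.toNNReal ((-f) σ) := by exact_mod_cast hσ
    have h2 := congrArg NNReal.toReal h1
    simp only [Real.coe_toNNReal', Pi.neg_apply] at h2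
    simp only [Pi.zero_apply]
    rcases le_total (f σ) 0 with h | h
    · rw [max_eq_right h, max_eq_left (by linarith)] at h2; linarith
    · rw [max_eq_left h, max_eq_right (by linarith)] at h2; linarith
  · intro m
    have hI : ∀ g : (Fin r → ℝ) → ℝ, Integrable g (torusMeasure r) →
        Integrable (fun σ => Real.toNNReal (g σ) • char m σ) (torusMeasure r) := by
      intro g hg
      refine (Integrable.bdd_mul (c := 1) (f := char m) (g := fun σ => ((Real.toNNReal (g σ) : ℝ) : ℂ))
        (Integrable.ofReal (Integrable.real_toNNReal hg)) (continuous_char m).aestronglyMeasurable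
        (Filter.Eventually.of_forall fun σ => (norm_char m σ).le)).congr
        (Filter.Eventually.of_forall fun σ => ?_)
      simp only [NNReal.smul_def, Complex.real_smul]
      exact mul_comm _ _
    rw [integral_withDensity_eq_integral_smul (hmeas _ hf), 
      integral_withDensity_eq_integral_smul (hmeas _ hf.neg), ← sub_eq_zero, ← integral_sub, ← h m]
    · congr 1
      funext σ
      simp only [NNReal.smul_def, Real.coe_toNNReal', Pi.neg_apply, ← sub_smul]
      rw [max_zero_sub_max_neg_zero_eq_self]
      simp [mul_comm]
    · exact hI f hfi
    · exact hI _ hfi.neg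

lemma torus_fourier_zero {r : ℕ} (f : (Fin r → ℝ) → ℂ) (hf : Measurable f)
    (hfi : Integrable f (torusMeasure r))
    (h : ∀ m : Fin r → ℤ, ∫ σ, char m σ * f σ ∂(torusMeasure r) = 0) :
    f =ᵐ[torusMeasure r] 0 := by
  have hbd : ∀ (g : (Fin r → ℝ) → ℂ) (_ : Integrable g (torusMeasure r)) (m : Fin r → ℤ),
      Integrable (fun σ => char m σ * g σ) (torusMeasure r) := fun g hg m =>
    hg.bdd_mul (c := 1) (continuous_char m).aestronglyMeasurable
        (Filter.Eventually.of_forall fun σ => (norm_char m σ).le)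
  have hconj : ∀ m : Fin r → ℤ, ∫ σ, char m σ * (starRingEnd ℂ) (f σ) ∂(torusMeasure r) = 0 := by
    intro m
    have := congrArg (starRingEnd ℂ) (h (-m))
    rw [← integral_conj] at this
    simpa [conj_char] using this
  have hfc : Integrable (fun σ => (starRingEnd ℂ) (f σ)) (torusMeasure r) := by
    refine hfi.congr' (Complex.continuous_conj.measurable.comp hf).aestronglyMeasurable ?_
    exact Filter.Eventually.of_forall fun σ => by simp
  have hre := real_fourier_zero (fun σ => (f σ).re) (Complex.measurable_re.comp hf) hfi.re (by
    intro m
    have : ∀ σ, char m σ * ((f σ).re : ℂ) =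
        (char m σ * f σ + char m σ * (starRingEnd ℂ) (f σ)) * (1/2) := by
      intro σ; rw [Complex.re_eq_add_conj]; ring
    simp_rw [this]
    rw [integral_mul_const, integral_add (hbd _ hfi m) (hbd _ hfc m), h, hconj]; simp)
  have him := real_fourier_zero (fun σ => (f σ).im) (Complex.measurable_im.comp hf) hfi.im (by
    intro m
    have : ∀ σ, char m σ * ((f σ).im : ℂ) =
        (char m σ * f σ - char m σ * (starRingEnd ℂ) (f σ)) * (1/(2 * Complex.I)) := by
      intro σ; rw [Complex.im_eq_sub_conj]; ring
    simp_rw [this]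
    rw [integral_mul_const, integral_sub (hbd _ hfi m) (hbd _ hfc m), h, hconj]; simp)
  filter_upwards [hre, him] with σ h1 h2
  exact Complex.ext h1 h2

/-- Finite combinations of the `a n σ` with coefficients in a countable dense set. -/
def combo {X H : Type*} [NormedAddCommGroup H] [InnerProductSpace ℂ H] (a : ℕ → X → H)
    (l : List (ℕ × ℕ)) (σ : X) : H :=
  (l.map fun p => TopologicalSpace.denseSeq ℂ p.1 • a p.2 σ).sum

lemma measurable_combo {X H : Type*} [MeasurableSpace X] [NormedAddCommGroup H]
    [InnerProductSpace ℂ H] {a : ℕ → X → H}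
    (ha : ∀ n, StronglyMeasurable (a n)) (l : List (ℕ × ℕ)) : StronglyMeasurable (combo a l) := by
  induction l with
  | nil =>
    have : combo a [] = fun _ : X => (0 : H) := by funext σ; simp [combo]
    rw [this]
    exact stronglyMeasurable_const
  | cons p l ih =>
    have : combo a (p :: l) = fun σ => TopologicalSpace.denseSeq ℂ p.1 • a p.2 σ + combo a l σ := by
      funext σ; simp [combo]
    rw [this]
    exact ((ha p.2).const_smul _).add ih

/-- The fibre spaces. -/
def fibre {X H : Type*} [NormedAddCommGroup H] [InnerProductSpace ℂ H] (a : ℕ → X → H) (σ : X) :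
    Submodule ℂ H := (Submodule.span ℂ (Set.range fun n => a n σ)).topologicalClosure

lemma combo_mem {X H : Type*} [NormedAddCommGroup H] [InnerProductSpace ℂ H] (a : ℕ → X → H)
    (σ : X) (l : List (ℕ × ℕ)) : combo a l σ ∈ fibre a σ := by
  refine Submodule.le_topologicalClosure _ ?_
  refine list_sum_mem fun x hx => ?_
  obtain ⟨p, _, rfl⟩ := List.mem_map.1 hx
  exact Submodule.smul_mem _ _ (Submodule.subset_span ⟨_, rfl⟩)

lemma fibre_subset {X H : Type*} [NormedAddCommGroup H] [InnerProductSpace ℂ H] (a : ℕ → X → H)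
    (σ : X) : (fibre a σ : Set H) ⊆ closure (Set.range fun l => combo a l σ) := by
  rw [fibre, Submodule.topologicalClosure_coe]
  refine closure_minimal ?_ isClosed_closure
  intro x hx
  induction hx using Submodule.closure_induction with
  | zero => exact subset_closure ⟨[], by simp [combo]⟩
  | add x y _ _ hx hy =>
    refine map_mem_closure₂ continuous_add hx hy ?_
    rintro _ ⟨l, rfl⟩ _ ⟨l', rfl⟩
    exact ⟨l ++ l', by simp [combo]⟩
  | smul_mem c x hx =>
    obtain ⟨n, rfl⟩ := hx
    refine map_mem_closure (f := fun c : ℂ => c • a n σ) (by fun_prop)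
      (TopologicalSpace.denseRange_denseSeq ℂ c) ?_
    rintro _ ⟨i, rfl⟩
    exact ⟨[(i, n)], by simp [combo]⟩

lemma proj_unique {H : Type*} [NormedAddCommGroup H] [InnerProductSpace ℂ H]
    {J : Submodule ℂ H} {u p : H} (hp : p ∈ J) (hup : u - p ∈ Jᗮ) :
    (inner ℂ p u : ℂ) = ((‖p‖ ^ 2 : ℝ) : ℂ) ∧ ‖u‖ ^ 2 = ‖p‖ ^ 2 + ‖u - p‖ ^ 2 ∧
    ∀ w ∈ J, ‖u - p‖ ≤ ‖u - w‖ := by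
  have h0 : ∀ w ∈ J, (inner ℂ w (u - p) : ℂ) = 0 := fun w hw => hup w hw
  have hpy : ∀ w ∈ J, ‖w + (u - p)‖ ^ 2 = ‖w‖ ^ 2 + ‖u - p‖ ^ 2 := by
    intro w hw
    rw [norm_add_sq (𝕜 := ℂ), h0 w hw]; simp
  refine ⟨?_, ?_, ?_⟩
  · have := h0 p hp
    rw [inner_sub_right, sub_eq_zero] at this
    rw [this, inner_self_eq_norm_sq_to_K]; simp
  · simpa using hpy p hp
  · intro w hw
    have := hpy (p - w) (J.sub_mem hp hw)
    rw [show p - w + (u - p) = u - w by abel] at this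
    refine le_of_sq_le_sq ?_ (norm_nonneg _)
    nlinarith [sq_nonneg ‖p - w‖]

lemma measurable_proj {X H : Type*} [MeasurableSpace X] [NormedAddCommGroup H]
    [InnerProductSpace ℂ H] {a : ℕ → X → H}
    (ha : ∀ n, StronglyMeasurable (a n)) (P : X → H →L[ℂ] H)
    (hP : ∀ σ (u : H), P σ u ∈ fibre a σ ∧ u - P σ u ∈ (fibre a σ)ᗮ) (u v : H) :
    Measurable fun σ => (inner ℂ (P σ u) v : ℂ) := by
  have hdist : ∀ u, Measurable fun σ => ‖u - P σ u‖ := by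
    intro u
    refine measurable_of_Iio fun c => ?_
    have : (fun σ => ‖u - P σ u‖) ⁻¹' Set.Iio c = ⋃ l, {σ | ‖u - combo a l σ‖ < c} := by
      ext σ
      simp only [Set.mem_preimage, Set.mem_Iio, Set.mem_iUnion, Set.mem_ofPred_eq]
      constructor
      · intro h
        have hcl := fibre_subset a σ (hP σ u).1
        have hopen : IsOpen {x : H | ‖u - x‖ < c} := isOpen_lt (by fun_prop) continuous_const
        obtain ⟨_, hx, l, rfl⟩ := mem_closure_iff.1 hcl _ hopen h
        exact ⟨l, hx⟩
      · rintro ⟨l, hl⟩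
        exact ((proj_unique (hP σ u).1 (hP σ u).2).2.2 _ (combo_mem a σ l)).trans_lt hl
    rw [this]
    refine MeasurableSet.iUnion fun l => ?_
    exact measurableSet_lt ((stronglyMeasurable_const.sub (measurable_combo ha l)).norm.measurable)
      measurable_const
  have hq : ∀ u, Measurable fun σ => (inner ℂ (P σ u) u : ℂ) := by
    intro u
    have : (fun σ => (inner ℂ (P σ u) u : ℂ)) = fun σ => ((‖u‖ ^ 2 - ‖u - P σ u‖ ^ 2 : ℝ) : ℂ) := by
      funext σ
      obtain ⟨h1, h2, -⟩ := proj_unique (hP σ u).1 (hP σ u).2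
      rw [h1, h2]; congr 1; ring
    rw [this]
    exact Complex.measurable_ofReal.comp (measurable_const.sub ((hdist u).pow_const 2))
  have : (fun σ => (inner ℂ (P σ u) v : ℂ)) = fun σ =>
      ((inner ℂ (P σ (u + v)) (u + v) : ℂ) - inner ℂ (P σ (u - v)) (u - v) -
            Complex.I * inner ℂ (P σ (u + Complex.I • v)) (u + Complex.I • v) +
          Complex.I * inner ℂ (P σ (u - Complex.I • v)) (u - Complex.I • v)) / 4 := by
    funext σ
    exact inner_map_polarization' (P σ : H →ₗ[ℂ] H) u v
  rw [this]
  exact (((hq _).sub (hq _)).sub ((hq _).const_mul _)).add ((hq _).const_mul _) |>.div_const 4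

lemma measurable_of_dist {X H : Type*} [MeasurableSpace X] [NormedAddCommGroup H]
    [TopologicalSpace.SeparableSpace H] [MeasurableSpace H] [BorelSpace H] (f : X → H)
    (hf : ∀ w : H, Measurable fun x => ‖f x - w‖) : Measurable f := by
  refine measurable_of_isOpen fun s hs => ?_
  have : f ⁻¹' s = ⋃ (n : ℕ) (q : ℚ) (_ : Metric.ball (TopologicalSpace.denseSeq H n) q ⊆ s),
      {x | ‖f x - TopologicalSpace.denseSeq H n‖ < q} := by
    ext x
    simp only [Set.mem_preimage, Set.mem_iUnion, Set.mem_ofPred_eq, exists_prop]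
    constructor
    · intro hx
      obtain ⟨ε, hε, hb⟩ := Metric.isOpen_iff.1 hs _ hx
      obtain ⟨q, hq0, hq⟩ := exists_rat_btwn (half_pos hε)
      obtain ⟨n, hn⟩ := (TopologicalSpace.denseRange_denseSeq H).exists_dist_lt (f x) hq0
      refine ⟨n, q, fun y hy => hb ?_, by rwa [← dist_eq_norm]⟩
      rw [Metric.mem_ball] at hy ⊢
      have := dist_triangle y (TopologicalSpace.denseSeq H n) (f x)
      rw [dist_comm] at hn
      linarith
    · rintro ⟨n, q, hb, hx⟩
      exact hb (by rwa [Metric.mem_ball, dist_eq_norm])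
  rw [this]
  exact MeasurableSet.iUnion fun n => MeasurableSet.iUnion fun q => MeasurableSet.iUnion fun _ =>
    measurableSet_lt (hf _) measurable_const

lemma range_le {X H : Type*} [MeasurableSpace X] {μ : Measure X} [IsFiniteMeasure μ]
    [NormedAddCommGroup H] [InnerProductSpace ℂ H]
    [TopologicalSpace.SeparableSpace H] [MeasurableSpace H] [BorelSpace H]
    (J J' : X → Submodule ℂ H) (hJ : ∀ σ, IsClosed (J σ : Set H)) (P : X → H →L[ℂ] H)
    (hP : ∀ σ (u : H), P σ u ∈ J' σ ∧ u - P σ u ∈ (J' σ)ᗮ)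
    (hPm : ∀ u v : H, Measurable fun σ => (inner ℂ (P σ u) v : ℂ))
    (hle : ∀ a : Lp H 2 μ, (∀ᵐ σ ∂μ, a σ ∈ J' σ) → ∀ᵐ σ ∂μ, a σ ∈ J σ) :
    ∀ᵐ σ ∂μ, J' σ ≤ J σ := by
  have hmeas : ∀ u, Measurable fun σ => P σ u := by
    intro u
    refine measurable_of_dist _ fun w => ?_
    have : (fun σ => ‖P σ u - w‖) = fun σ =>
        √((inner ℂ (P σ u) u : ℂ).re - 2 * (inner ℂ (P σ u) w : ℂ).re + ‖w‖ ^ 2) := by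
      funext σ
      rw [(proj_unique (hP σ u).1 (hP σ u).2).1, Complex.ofReal_re]
      have := norm_sub_sq (𝕜 := ℂ) (P σ u) w
      rw [RCLike.re_eq_complex_re] at this
      rw [← this, Real.sqrt_sq (norm_nonneg _)]
    rw [this]
    have h1 := Complex.measurable_re.comp (hPm u u)
    have h2 := Complex.measurable_re.comp (hPm u w)
    exact ((h1.sub (h2.const_mul 2)).add_const _).sqrt
  have hmem : ∀ u, MemLp (fun σ => P σ u) 2 μ := by
    intro u
    refine MemLp.of_bound (hmeas u).stronglyMeasurable.aestronglyMeasurable ‖u‖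
      (Filter.Eventually.of_forall fun σ => ?_)
    have := (proj_unique (hP σ u).1 (hP σ u).2).2.1
    refine le_of_sq_le_sq ?_ (norm_nonneg _)
    nlinarith [sq_nonneg ‖u - P σ u‖]
  have hall : ∀ᵐ σ ∂μ, ∀ n, P σ (TopologicalSpace.denseSeq H n) ∈ J σ := by
    rw [ae_all_iff]
    intro n
    have h := hle ((hmem (TopologicalSpace.denseSeq H n)).toLp _) (by
      filter_upwards [(hmem (TopologicalSpace.denseSeq H n)).coeFn_toLp] with σ hσ
      rw [hσ]; exact (hP σ _).1)
    filter_upwards [(hmem (TopologicalSpace.denseSeq H n)).coeFn_toLp, h] with σ hσ h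
    rwa [hσ] at h
  filter_upwards [hall] with σ hσ x hx
  have hPx : P σ x = x := by
    have := (proj_unique (hP σ x).1 (hP σ x).2).2.2 x hx
    rw [sub_self, norm_zero] at this
    exact (sub_eq_zero.1 (norm_le_zero_iff.1 this)).symm
  rw [← hPx]
  have : ∀ y, P σ y ∈ J σ := by
    intro y
    have hcl : IsClosed {y | P σ y ∈ J σ} := (hJ σ).preimage (P σ).continuous
    exact (TopologicalSpace.denseRange_denseSeq H).induction_on (p := fun y => P σ y ∈ J σ) y hcl hσ
  exact this x

lemma memLp_of_norm_eq {X H : Type*} [MeasurableSpace X] {μ : Measure X}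
    [NormedAddCommGroup H] (a : Lp H 2 μ) (f : X → H) (hf : AEStronglyMeasurable f μ)
    (h : ∀ σ, ‖f σ‖ = ‖a σ‖) : MemLp f 2 μ :=
  (Lp.memLp a).of_le hf (Filter.Eventually.of_forall fun σ => (h σ).le)

lemma mem_fibre_of_mem_closure {X H : Type*} [MeasurableSpace X] {μ : Measure X}
    [NormedAddCommGroup H] [InnerProductSpace ℂ H] (b : ℕ → Lp H 2 μ) (a : Lp H 2 μ)
    (ha : a ∈ closure (Set.range b)) : ∀ᵐ σ ∂μ, a σ ∈ fibre (fun n => ⇑(b n)) σ := by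
  obtain ⟨x, hx, hlim⟩ := mem_closure_iff_seq_limit.1 ha
  choose i hi using hx
  obtain ⟨ns, -, hns⟩ := (tendstoInMeasure_of_tendsto_Lp hlim).exists_seq_tendsto_ae
  filter_upwards [hns] with σ hσ
  refine (Submodule.isClosed_topologicalClosure _).mem_of_tendsto hσ
    (Filter.Eventually.of_forall fun k => ?_)
  refine Submodule.le_topologicalClosure _ (Submodule.subset_span ⟨i (ns k), ?_⟩)
  simp [hi]

/-- **Characterization of shift-invariant subspaces (transform side).** A closed subspace
`M ⊆ L²(𝕋^r, H)` is invariant under all modulations and the fiberwise operators `Ũ_k` iff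
`M = M_J` for a measurable range function `J` (measurability expressed by a family `P` of
orthogonal projections), unique up to a.e. equality, whose fibers are `U_k(σ)`-invariant a.e. -/
theorem shift_invariant_iff_range_function (r : ℕ) (hr : 0 < r)
    {H : Type} [NormedAddCommGroup H] [InnerProductSpace ℂ H] [CompleteSpace H]
    [TopologicalSpace.SeparableSpace H] [MeasurableSpace H] [BorelSpace H]
    {K : Type} [Countable K]
    (U : K → (Fin r → ℝ) → (H ≃ₗᵢ[ℂ] H))
    (hUmeas : ∀ (k : K) (v : H), Measurable fun σ => U k σ v)
    (M : Submodule ℂ (Lp H 2 (torusMeasure r)))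
    (hMcl : IsClosed (M : Set (Lp H 2 (torusMeasure r)))) :
    ((∀ a ∈ M, ∀ m : Fin r → ℤ,
        ∃ b ∈ M, ⇑b =ᵐ[torusMeasure r] fun σ => char m σ • ⇑a σ) ∧
      (∀ a ∈ M, ∀ k : K,
        ∃ b ∈ M, ⇑b =ᵐ[torusMeasure r] fun σ => U k σ (⇑a σ))) ↔
    (∃ J : (Fin r → ℝ) → Submodule ℂ H,
      (∀ σ, IsClosed (J σ : Set H)) ∧
      (∃ P : (Fin r → ℝ) → H →L[ℂ] H,
        (∀ σ (u : H), P σ u ∈ J σ ∧ u - P σ u ∈ (J σ)ᗮ) ∧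
        ∀ u v : H, Measurable fun σ => (inner ℂ (P σ u) v : ℂ)) ∧
      (M : Set (Lp H 2 (torusMeasure r))) =
        {a : Lp H 2 (torusMeasure r) | ∀ᵐ σ ∂(torusMeasure r), ⇑a σ ∈ J σ} ∧
      (∀ k : K, ∀ᵐ σ ∂(torusMeasure r), ∀ x ∈ J σ, U k σ x ∈ J σ) ∧
      (∀ J' : (Fin r → ℝ) → Submodule ℂ H,
        (∀ σ, IsClosed (J' σ : Set H)) →
        (∃ P' : (Fin r → ℝ) → H →L[ℂ] H,
          (∀ σ (u : H), P' σ u ∈ J' σ ∧ u - P' σ u ∈ (J' σ)ᗮ) ∧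
          ∀ u v : H, Measurable fun σ => (inner ℂ (P' σ u) v : ℂ)) →
        (M : Set (Lp H 2 (torusMeasure r))) =
          {a : Lp H 2 (torusMeasure r) | ∀ᵐ σ ∂(torusMeasure r), ⇑a σ ∈ J' σ} →
        (∀ k : K, ∀ᵐ σ ∂(torusMeasure r), ∀ x ∈ J' σ, U k σ x ∈ J' σ) →
        ∀ᵐ σ ∂(torusMeasure r), J σ = J' σ)) := by
  have hr' := hr
  constructor
  · rintro ⟨hmod, hU⟩
    have hne : Nonempty M := ⟨0⟩
    have : Fact ((1 : ℝ≥0∞) ≤ 2) := ⟨by norm_num⟩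
    have : Fact ((2 : ℝ≥0∞) ≠ ∞) := ⟨by norm_num⟩
    have : CompleteSpace M := hMcl.completeSpace_coe
    let b : ℕ → Lp H 2 (torusMeasure r) := fun n => (TopologicalSpace.denseSeq M n : M)
    have hbM : ∀ n, b n ∈ M := fun n => (TopologicalSpace.denseSeq M n : M).2
    have hbd : ∀ a ∈ M, a ∈ closure (Set.range b) := by
      intro a ha
      refine map_mem_closure (f := fun x : M => (x : Lp H 2 (torusMeasure r)))
        continuous_subtype_val (TopologicalSpace.denseRange_denseSeq M ⟨a, ha⟩) ?_
      rintro _ ⟨n, rfl⟩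
      exact ⟨n, rfl⟩
    let J := fibre fun n => ⇑(b n)
    have hJcl : ∀ σ, IsClosed (J σ : Set H) := fun σ => Submodule.isClosed_topologicalClosure _
    have hJc : ∀ σ, CompleteSpace (J σ) := fun σ => (hJcl σ).completeSpace_coe
    let P : (Fin r → ℝ) → H →L[ℂ] H := fun σ => (J σ).starProjection
    have hP : ∀ σ (u : H), P σ u ∈ J σ ∧ u - P σ u ∈ (J σ)ᗮ := fun σ u =>
      ⟨Submodule.starProjection_apply_mem _ _, Submodule.sub_starProjection_mem_orthogonal _⟩
    have hPm : ∀ u v : H, Measurable fun σ => (inner ℂ (P σ u) v : ℂ) :=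
      measurable_proj (fun n => Lp.stronglyMeasurable (b n)) P hP
    have hbJ : ∀ n σ, b n σ ∈ J σ := fun n σ =>
      Submodule.le_topologicalClosure _ (Submodule.subset_span ⟨n, rfl⟩)
    have hMJ : ∀ a ∈ M, ∀ᵐ σ ∂(torusMeasure r), a σ ∈ J σ := fun a ha =>
      mem_fibre_of_mem_closure b a (hbd a ha)
    have hJle : ∀ (σ : Fin r → ℝ) (N : Submodule ℂ H), IsClosed (N : Set H) →
        (∀ n, b n σ ∈ N) → J σ ≤ N := by
      intro σ N hN h
      refine Submodule.topologicalClosure_minimal _ (Submodule.span_le.2 ?_) hN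
      rintro _ ⟨n, rfl⟩
      exact h n
    have hJM : ∀ a : Lp H 2 (torusMeasure r), (∀ᵐ σ ∂(torusMeasure r), a σ ∈ J σ) → a ∈ M := by
      intro a ha
      let c : Lp H 2 (torusMeasure r) := M.starProjection a
      have hcM : c ∈ M := Submodule.starProjection_apply_mem _ _
      have hort : a - c ∈ Mᗮ := Submodule.sub_starProjection_mem_orthogonal _
      have hmemJ : ∀ᵐ σ ∂(torusMeasure r), (a - c) σ ∈ J σ := by
        filter_upwards [ha, hMJ c hcM, Lp.coeFn_sub a c] with σ h1 h2 h3
        rw [h3]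
        exact (J σ).sub_mem h1 h2
      have hz : ∀ n, (fun σ => (inner ℂ (b n σ) ((a - c) σ) : ℂ)) =ᵐ[torusMeasure r] 0 := by
        intro n
        refine torus_fourier_zero _ ?_ (L2.integrable_inner (𝕜 := ℂ) (b n) (a - c)) ?_
        · exact ((Lp.stronglyMeasurable (b n)).inner (Lp.stronglyMeasurable (a - c))).measurable
        · intro m
          obtain ⟨d, hd, hde⟩ := hmod (b n) (hbM n) (-m)
          have h0 : (inner ℂ d (a - c) : ℂ) = 0 := hort d hd
          rw [L2.inner_def] at h0
          rw [← h0]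
          refine integral_congr_ae ?_
          filter_upwards [hde] with σ hσ
          rw [hσ, inner_smul_left, conj_char, neg_neg]
      have hzero : a - c = 0 := by
        rw [Lp.eq_zero_iff_ae_eq_zero]
        filter_upwards [hmemJ, ae_all_iff.2 hz] with σ h1 h2
        have hle := hJle σ (Submodule.span ℂ {(a - c) σ})ᗮ (Submodule.isClosed_orthogonal _) (by
          intro n
          rw [Submodule.mem_orthogonal_singleton_iff_inner_left]
          exact h2 n)
        have := hle h1
        rw [Submodule.mem_orthogonal_singleton_iff_inner_left] at this
        exact inner_self_eq_zero.1 this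
      rw [sub_eq_zero.1 hzero]
      exact hcM
    refine ⟨J, hJcl, ⟨P, hP, hPm⟩, ?_, ?_, ?_⟩
    · ext a
      exact ⟨hMJ a, hJM a⟩
    · intro k
      have h : ∀ n, ∀ᵐ σ ∂(torusMeasure r), U k σ (b n σ) ∈ J σ := by
        intro n
        obtain ⟨d, hd, hde⟩ := hU (b n) (hbM n) k
        filter_upwards [hde, hMJ d hd] with σ h1 h2
        rwa [h1] at h2
      filter_upwards [ae_all_iff.2 h] with σ hσ x hx
      exact hJle σ ((J σ).comap ((U k σ).toLinearEquiv : H →ₗ[ℂ] H))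
        ((hJcl σ).preimage (U k σ).continuous) hσ hx
    · rintro J' hJ'cl ⟨P', hP', hP'm⟩ hMJ' -
      have hiff : ∀ a : Lp H 2 (torusMeasure r), a ∈ M ↔ ∀ᵐ σ ∂(torusMeasure r), a σ ∈ J' σ :=
        fun a => Set.ext_iff.1 hMJ' a
      have h1 := range_le (μ := torusMeasure r) J J' hJcl P' hP' hP'm
        fun a ha => hMJ a ((hiff a).2 ha)
      have h2 := range_le (μ := torusMeasure r) J' J hJ'cl P hP hPm
        fun a ha => (hiff a).1 (hJM a ha)
      filter_upwards [h1, h2] with σ h1 h2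
      exact le_antisymm h2 h1
  · rintro ⟨J, -, -, hM, hUJ, -⟩
    have hiff : ∀ a : Lp H 2 (torusMeasure r), a ∈ M ↔ ∀ᵐ σ ∂(torusMeasure r), a σ ∈ J σ :=
      fun a => Set.ext_iff.1 hM a
    constructor
    · intro a ha m
      have hmem : MemLp (fun σ => char m σ • a σ) 2 (torusMeasure r) :=
        memLp_of_norm_eq a _ ((continuous_char m).aestronglyMeasurable.smul
          (Lp.aestronglyMeasurable a)) fun σ => by rw [norm_smul, norm_char, one_mul]
      refine ⟨hmem.toLp _, (hiff _).2 ?_, hmem.coeFn_toLp⟩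
      filter_upwards [hmem.coeFn_toLp, (hiff a).1 ha] with σ h1 h2
      rw [h1]
      exact (J σ).smul_mem _ h2
    · intro a ha k
      have hmeas : StronglyMeasurable fun σ => U k σ (a σ) := by
        have h := stronglyMeasurable_uncurry_of_continuous_of_stronglyMeasurable
          (u := fun (x : H) (σ : Fin r → ℝ) => U k σ x) (fun σ => (U k σ).continuous)
          (fun v => (hUmeas k v).stronglyMeasurable)
        exact h.comp_measurable ((Lp.stronglyMeasurable a).measurable.prodMk measurable_id)
      have hmem : MemLp (fun σ => U k σ (a σ)) 2 (torusMeasure r) :=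
        memLp_of_norm_eq a _ hmeas.aestronglyMeasurable fun σ => (U k σ).norm_map _
      refine ⟨hmem.toLp _, (hiff _).2 ?_, hmem.coeFn_toLp⟩
      filter_upwards [hmem.coeFn_toLp, (hiff a).1 ha, hUJ k] with σ h1 h2 h3
      rw [h1]
      exact h3 _ h2
end
end

section
/- Let 0 < A ≤ B < ∞. The family {f_{i,m} : i ∈ I, m ∈ ℤ^r} is a frame for S with constants A and B if and only if for a.e. σ ∈ 𝕋^r the family {g_i(σ) : i ∈ I} is a frame for J(σ) with the same constants A and B. -/
open MeasureTheory
open scoped ENNReal NNReal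

noncomputable section

/-- Normalised Haar measure on the torus. -/
abbrev torVol (r : ℕ) : Measure (UnitAddTorus (Fin r)) :=
  Measure.pi fun _ => AddCircle.haarAddCircle

lemma exists_section (r : ℕ) : ∃ s : UnitAddTorus (Fin r) → (Fin r → ℝ),
    MeasurePreserving s (torVol r) (torusMeasure r) ∧
      ∀ m t, char m (s t) = UnitAddTorus.mFourier m t := by
  refine ⟨fun t i => (AddCircle.equivIoc 1 0 (t i)).1, ?_, ?_⟩
  · have h1 := UnitAddTorus.measurePreserving_equivPiIoc (d := Fin r) (fun _ => (0 : ℝ))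
    have hms : MeasurableSet {x : Fin r → ℝ | ∀ i, x i ∈ Set.Ioc (0 : ℝ) (0 + 1)} :=
      MeasurableSet.univ_pi' (fun i => measurableSet_Ioc)
    have h2 := (measurePreserving_subtype_coe (μa := (volume : Measure (Fin r → ℝ))) hms).comp h1
    have h3 : (volume : Measure (Fin r → ℝ)).restrict
        {x : Fin r → ℝ | ∀ i, x i ∈ Set.Ioc (0 : ℝ) (0 + 1)} = torusMeasure r := by
      unfold torusMeasure cube
      apply Measure.restrict_congr_set
      have e : {x : Fin r → ℝ | ∀ i, x i ∈ Set.Ioc (0 : ℝ) (0 + 1)} =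
          Set.univ.pi fun i : Fin r => Set.Ioc ((fun _ => (0 : ℝ)) i) ((fun _ => (1 : ℝ)) i) := by
        ext x; simp [Set.mem_pi]
      rw [e]
      exact (Measure.univ_pi_Ioc_ae_eq_Icc (μ := fun _ : Fin r => (volume : Measure ℝ))).trans
        (Measure.univ_pi_Ico_ae_eq_Icc (μ := fun _ : Fin r => (volume : Measure ℝ))).symm
    rw [h3] at h2
    exact h2
  · intro m t
    have ht : ∀ i, (((AddCircle.equivIoc 1 0 (t i)).1 : ℝ) : UnitAddCircle) = t i := fun i =>
      (AddCircle.equivIoc (1 : ℝ) 0).symm_apply_apply (t i)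
    simp only [UnitAddTorus.mFourier, ContinuousMap.coe_mk, char]
    conv_rhs => enter [2, i]; rw [← ht i, fourier_coe_apply]
    rw [← Complex.exp_sum, Finset.mul_sum]
    congr 1
    refine Finset.sum_congr rfl fun i _ => ?_
    simp only [Complex.ofReal_one, div_one]
    ring

lemma parseval_torus (r : ℕ) (F : UnitAddTorus (Fin r) → ℂ) (hF : MemLp F 2 (torVol r)) :
    ∑' m : Fin r → ℤ, (‖∫ t, UnitAddTorus.mFourier m t * F t ∂(torVol r)‖₊ : ℝ≥0∞) ^ 2 =
      ∫⁻ t, (‖F t‖₊ : ℝ≥0∞) ^ 2 ∂(torVol r) := by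
  have h := UnitAddTorus.hasSum_sq_mFourierCoeff (d := Fin r) hF.toLp
  have hc : ∀ m, UnitAddTorus.mFourierCoeff (⇑hF.toLp) m =
      ∫ t, UnitAddTorus.mFourier (-m) t * F t ∂(torVol r) := by
    intro m
    refine integral_congr_ae ?_
    filter_upwards [hF.coeFn_toLp] with t ht
    rw [ht, smul_eq_mul]
  rw [← (Equiv.neg (Fin r → ℤ)).tsum_eq]
  simp only [Equiv.neg_apply]
  have h2 : ∀ m, (‖∫ t, UnitAddTorus.mFourier (-m) t * F t ∂(torVol r)‖₊ : ℝ≥0∞) ^ 2 =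
      ENNReal.ofReal (‖UnitAddTorus.mFourierCoeff (⇑hF.toLp) m‖ ^ 2) := by
    intro m
    rw [hc, ENNReal.ofReal_pow (norm_nonneg _), ofReal_norm]; rfl
  simp_rw [h2]
  rw [← ENNReal.ofReal_tsum_of_nonneg (fun _ => by positivity) h.summable, h.tsum_eq]
  rw [ofReal_integral_eq_lintegral_ofReal]
  · refine lintegral_congr_ae ?_
    filter_upwards [hF.coeFn_toLp] with t ht
    rw [ht, ENNReal.ofReal_pow (norm_nonneg _), ofReal_norm]; rfl
  · exact (Lp.memLp hF.toLp).integrable_norm_pow (by norm_num)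
  · exact Filter.Eventually.of_forall fun _ => by positivity

lemma parseval_cube (r : ℕ) (F : (Fin r → ℝ) → ℂ) (hF : MemLp F 2 (torusMeasure r)) :
    ∑' m : Fin r → ℤ, (‖∫ t, char m t * F t ∂(torusMeasure r)‖₊ : ℝ≥0∞) ^ 2 =
      ∫⁻ t, (‖F t‖₊ : ℝ≥0∞) ^ 2 ∂(torusMeasure r) := by
  obtain ⟨s, hs, hc⟩ := exists_section r
  have h := parseval_torus r (F ∘ s) (hF.comp_measurePreserving hs)
  have h1 : ∀ m, ∫ t, char m t * F t ∂(torusMeasure r) =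
      ∫ t, UnitAddTorus.mFourier m t * (F ∘ s) t ∂(torVol r) := by
    intro m
    have hcm : Continuous (char m : (Fin r → ℝ) → ℂ) := by unfold char; fun_prop
    rw [← hs.map_eq, integral_map hs.aemeasurable]
    · simp [hc]
    · rw [hs.map_eq]
      exact hcm.aestronglyMeasurable.mul hF.1
  simp_rw [h1]
  rw [h]
  conv_rhs => rw [← hs.map_eq]
  rw [lintegral_map' _ hs.aemeasurable]
  · rfl
  · rw [hs.map_eq]
    exact hF.1.enorm.pow_const 2

lemma uniq_torus (r : ℕ) (G : UnitAddTorus (Fin r) → ℂ) (hG : Integrable G (torVol r))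
    (h : ∀ m, ∫ t, UnitAddTorus.mFourier m t * G t ∂(torVol r) = 0) : G =ᵐ[torVol r] 0 := by
  have hint : ∀ p : C(UnitAddTorus (Fin r), ℂ), Integrable (fun t => p t * G t) (torVol r) := by
    intro p
    refine hG.bdd_mul (c := ‖p‖) p.continuous.aestronglyMeasurable ?_
    exact Filter.Eventually.of_forall fun t => p.norm_coe_le_norm t
  have hall : ∀ p : C(UnitAddTorus (Fin r), ℂ), ∫ t, p t * G t ∂(torVol r) = 0 := by
    let L : C(UnitAddTorus (Fin r), ℂ) →ₗ[ℂ] ℂ :=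
      { toFun := fun p => ∫ t, p t * G t ∂(torVol r)
        map_add' := fun p q => by
          simp only [ContinuousMap.add_apply, add_mul]
          exact integral_add (hint p) (hint q)
        map_smul' := fun c p => by
          simp only [ContinuousMap.smul_apply, smul_eq_mul, mul_assoc, RingHom.id_apply]
          exact integral_const_mul _ _ }
    let L' : C(UnitAddTorus (Fin r), ℂ) →L[ℂ] ℂ :=
      L.mkContinuous (∫ t, ‖G t‖ ∂(torVol r)) fun p => by
        calc ‖∫ t, p t * G t ∂(torVol r)‖ ≤ ∫ t, ‖p t * G t‖ ∂(torVol r) :=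
              norm_integral_le_integral_norm _
          _ ≤ ∫ t, ‖p‖ * ‖G t‖ ∂(torVol r) := by
              refine integral_mono (hint p).norm (hG.norm.const_mul _) fun t => ?_
              simp only [norm_mul]
              gcongr
              exact p.norm_coe_le_norm t
          _ = _ := by rw [integral_const_mul, mul_comm]
    intro p
    have hcl : (Submodule.span ℂ (Set.range (UnitAddTorus.mFourier (d := Fin r)))).topologicalClosure
        ≤ LinearMap.ker (L' : C(UnitAddTorus (Fin r), ℂ) →ₗ[ℂ] ℂ) := by
      refine Submodule.topologicalClosure_minimal _ ?_ L'.isClosed_ker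
      rw [Submodule.span_le]
      rintro _ ⟨m, rfl⟩
      exact h m
    rw [UnitAddTorus.span_mFourier_closure_eq_top] at hcl
    exact hcl (x := p) trivial
  refine ae_eq_zero_of_forall_setIntegral_isClosed_eq_zero hG fun s hs => ?_
  let a : ℕ → C(UnitAddTorus (Fin r), ℂ) := fun n =>
    ⟨fun t => (((hs.apprSeq n t : ℝ≥0) : ℝ) : ℂ), by fun_prop⟩
  have h1 : Filter.Tendsto (fun n => ∫ t, a n t * G t ∂(torVol r)) Filter.atTop
      (nhds (∫ t, s.indicator G t ∂(torVol r))) := by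
    refine tendsto_integral_of_dominated_convergence (fun t => ‖G t‖)
      (fun n => (hint (a n)).1) hG.norm ?_ ?_
    · refine fun n => Filter.Eventually.of_forall fun t => ?_
      have : ‖a n t‖ ≤ 1 := by
        simp only [a, ContinuousMap.coe_mk, Complex.norm_real, Real.norm_eq_abs, NNReal.abs_eq]
        exact_mod_cast HasOuterApproxClosed.apprSeq_apply_le_one hs n t
      rw [norm_mul]
      exact mul_le_of_le_one_left (norm_nonneg _) this
    · refine Filter.Eventually.of_forall fun t => ?_
      have h2 := (tendsto_pi_nhds.1 (HasOuterApproxClosed.tendsto_apprSeq hs)) t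
      have h3 : Filter.Tendsto (fun n => a n t * G t) Filter.atTop
          (nhds ((((s.indicator (fun _ => (1 : ℝ≥0)) t : ℝ≥0) : ℝ) : ℂ) * G t)) :=
        ((Complex.continuous_ofReal.comp NNReal.continuous_coe).tendsto _ |>.comp h2).mul_const _
      convert h3 using 2
      by_cases hts : t ∈ s <;> simp [hts]
  simp_rw [hall] at h1
  rw [integral_indicator hs.measurableSet] at h1
  exact (tendsto_nhds_unique h1 tendsto_const_nhds)

lemma uniq_cube (r : ℕ) (G : (Fin r → ℝ) → ℂ) (hG : Integrable G (torusMeasure r))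
    (h : ∀ m, ∫ t, char m t * G t ∂(torusMeasure r) = 0) : G =ᵐ[torusMeasure r] 0 := by
  obtain ⟨s, hs, hc⟩ := exists_section r
  have h0 := uniq_torus r (G ∘ s) (hs.integrable_comp_of_integrable hG) (by
    intro m
    rw [← h m]
    have hcm : Continuous (char m : (Fin r → ℝ) → ℂ) := by unfold char; fun_prop
    conv_rhs => rw [← hs.map_eq]
    rw [integral_map hs.aemeasurable]
    · simp [hc]
    · rw [hs.map_eq]
      exact hcm.aestronglyMeasurable.mul hG.1)
  have h1 : ∫⁻ t, ‖G t‖ₑ ∂(torusMeasure r) = 0 := by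
    rw [← hs.map_eq, lintegral_map' _ hs.aemeasurable]
    · rw [lintegral_congr_ae (g := fun _ => 0)]
      · simp
      · filter_upwards [h0] with t ht
        simpa using ht
    · rw [hs.map_eq]; exact hG.1.enorm
  rw [lintegral_eq_zero_iff' hG.1.enorm] at h1
  filter_upwards [h1] with t ht
  simpa using ht

lemma enorm_add_sq_le (δ : ℝ≥0) (hδ : δ ≠ 0) (a b : ℂ) :
    (‖a + b‖₊ : ℝ≥0∞) ^ 2 ≤ ((1 + δ : ℝ≥0) : ℝ≥0∞) * (‖a‖₊ : ℝ≥0∞) ^ 2 +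
      ((1 + δ⁻¹ : ℝ≥0) : ℝ≥0∞) * (‖b‖₊ : ℝ≥0∞) ^ 2 := by
  have hd : (0 : ℝ) < δ := by positivity
  norm_cast
  rw [← NNReal.coe_le_coe]
  push_cast
  have h1 : ‖a + b‖ ^ 2 ≤ (‖a‖ + ‖b‖) ^ 2 := by gcongr; exact norm_add_le a b
  have h2 : (1 + (δ : ℝ)) * ‖a‖ ^ 2 + (1 + (δ : ℝ)⁻¹) * ‖b‖ ^ 2 - (‖a‖ + ‖b‖) ^ 2 =
      (δ : ℝ)⁻¹ * (δ * ‖a‖ - ‖b‖) ^ 2 := by field_simp; ring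
  have h3 : 0 ≤ (δ : ℝ)⁻¹ * (δ * ‖a‖ - ‖b‖) ^ 2 := by positivity
  linarith

lemma fiber_ext {H : Type} [NormedAddCommGroup H] [InnerProductSpace ℂ H] {I : Type}
    (v : I → H) (A B : ℝ) (a : ℕ → I → ℂ) (ha : DenseRange a)
    (h : ∀ (t : Finset I) (n : ℕ),
      ENNReal.ofReal A * (‖∑ i ∈ t, a n i • v i‖₊ : ℝ≥0∞) ^ 2 ≤
          ∑' i : I, (‖(inner ℂ (∑ i ∈ t, a n i • v i) (v i) : ℂ)‖₊ : ℝ≥0∞) ^ 2 ∧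
        ∑' i : I, (‖(inner ℂ (∑ i ∈ t, a n i • v i) (v i) : ℂ)‖₊ : ℝ≥0∞) ^ 2 ≤
          ENNReal.ofReal B * (‖∑ i ∈ t, a n i • v i‖₊ : ℝ≥0∞) ^ 2)
    (x : H) (hx : x ∈ (Submodule.span ℂ (Set.range v)).topologicalClosure) :
      ENNReal.ofReal A * (‖x‖₊ : ℝ≥0∞) ^ 2 ≤ ∑' i : I, (‖(inner ℂ x (v i) : ℂ)‖₊ : ℝ≥0∞) ^ 2 ∧
        ∑' i : I, (‖(inner ℂ x (v i) : ℂ)‖₊ : ℝ≥0∞) ^ 2 ≤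
          ENNReal.ofReal B * (‖x‖₊ : ℝ≥0∞) ^ 2 := by
  set J := (Submodule.span ℂ (Set.range v)).topologicalClosure with hJ
  let D : Set H := Set.range fun p : Finset I × ℕ => ∑ i ∈ p.1, a p.2 i • v i
  have hDJ : ∀ y ∈ D, y ∈ J := by
    rintro _ ⟨p, rfl⟩
    refine Submodule.le_topologicalClosure _ (Submodule.sum_mem _ fun i _ => ?_)
    exact Submodule.smul_mem _ _ (Submodule.subset_span ⟨i, rfl⟩)
  have hJD : ∀ y ∈ J, y ∈ closure D := by
    intro y hy
    have hsp : ((Submodule.span ℂ (Set.range v) : Submodule ℂ H) : Set H) ⊆ closure D := by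
      intro z hz
      obtain ⟨c, rfl⟩ := Finsupp.mem_span_range_iff_exists_finsupp.1 hz
      have hcont : Continuous fun b : I → ℂ => ∑ i ∈ c.support, b i • v i := by fun_prop
      have hm := hcont.range_subset_closure_image_dense ha ⟨(c : I → ℂ), rfl⟩
      refine closure_mono ?_ hm
      rintro _ ⟨_, ⟨n, rfl⟩, rfl⟩
      exact ⟨(c.support, n), rfl⟩
    exact closure_minimal hsp isClosed_closure hy
  have hup : ∀ y ∈ J, ∑' i : I, (‖(inner ℂ y (v i) : ℂ)‖₊ : ℝ≥0∞) ^ 2 ≤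
          ENNReal.ofReal B * (‖y‖₊ : ℝ≥0∞) ^ 2 := by
    intro y hy
    rw [ENNReal.tsum_eq_iSup_sum]
    refine iSup_le fun t => ?_
    have hcl : IsClosed {y : H | ∑ i ∈ t, (‖(inner ℂ y (v i) : ℂ)‖₊ : ℝ≥0∞) ^ 2 ≤
        ENNReal.ofReal B * (‖y‖₊ : ℝ≥0∞) ^ 2} := by
      refine isClosed_le ?_ ?_
      · refine continuous_finsetSum _ fun i _ => ?_
        exact (ENNReal.continuous_pow 2).comp (ENNReal.continuous_coe.comp (by fun_prop))
      · exact (ENNReal.continuous_const_mul ENNReal.ofReal_ne_top).comp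
          ((ENNReal.continuous_pow 2).comp (ENNReal.continuous_coe.comp (by fun_prop)))
    refine closure_minimal ?_ hcl (hJD y hy)
    rintro _ ⟨p, rfl⟩
    exact (ENNReal.sum_le_tsum t).trans (h p.1 p.2).2
  refine ⟨?_, hup x hx⟩
  have key : ∀ δ : ℝ≥0, δ ≠ 0 → ENNReal.ofReal A * (‖x‖₊ : ℝ≥0∞) ^ 2 ≤
      ((1 + δ : ℝ≥0) : ℝ≥0∞) * ∑' i : I, (‖(inner ℂ x (v i) : ℂ)‖₊ : ℝ≥0∞) ^ 2 := by
    intro δ hδ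
    have hcl : IsClosed {y : H | ENNReal.ofReal A * (‖y‖₊ : ℝ≥0∞) ^ 2 ≤
        ((1 + δ : ℝ≥0) : ℝ≥0∞) * ∑' i : I, (‖(inner ℂ x (v i) : ℂ)‖₊ : ℝ≥0∞) ^ 2 +
        ((1 + δ⁻¹ : ℝ≥0) : ℝ≥0∞) * (ENNReal.ofReal B * (‖y - x‖₊ : ℝ≥0∞) ^ 2)} := by
      refine isClosed_le ?_ (continuous_const.add ?_)
      · exact (ENNReal.continuous_const_mul ENNReal.ofReal_ne_top).comp
          ((ENNReal.continuous_pow 2).comp (ENNReal.continuous_coe.comp (by fun_prop)))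
      · exact (ENNReal.continuous_const_mul ENNReal.coe_ne_top).comp
          ((ENNReal.continuous_const_mul ENNReal.ofReal_ne_top).comp
          ((ENNReal.continuous_pow 2).comp (ENNReal.continuous_coe.comp (by fun_prop))))
    have hxm := closure_minimal (s := D) ?_ hcl (hJD x hx)
    · simpa using hxm
    · intro y hy
      have hyJ := hDJ y hy
      have h1 : ENNReal.ofReal A * (‖y‖₊ : ℝ≥0∞) ^ 2 ≤
          ∑' i : I, (‖(inner ℂ y (v i) : ℂ)‖₊ : ℝ≥0∞) ^ 2 := by
        obtain ⟨p, rfl⟩ := hy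
        exact (h p.1 p.2).1
      refine h1.trans ?_
      have h2 := hup (y - x) (J.sub_mem hyJ hx)
      refine le_trans ?_ (add_le_add_right (mul_le_mul_right h2 _) _)
      rw [← ENNReal.tsum_mul_left, ← ENNReal.tsum_mul_left, ← ENNReal.tsum_add]
      refine ENNReal.tsum_le_tsum fun i => ?_
      have := enorm_add_sq_le δ hδ (inner ℂ x (v i)) (inner ℂ (y - x) (v i))
      rwa [← inner_add_left, add_sub_cancel] at this
  have hlim : Filter.Tendsto (fun δ : ℝ≥0 => ((1 + δ : ℝ≥0) : ℝ≥0∞) *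
      ∑' i : I, (‖(inner ℂ x (v i) : ℂ)‖₊ : ℝ≥0∞) ^ 2) (nhdsWithin 0 {0}ᶜ)
      (nhds (((1 + 0 : ℝ≥0) : ℝ≥0∞) * ∑' i : I, (‖(inner ℂ x (v i) : ℂ)‖₊ : ℝ≥0∞) ^ 2)) := by
    refine Filter.Tendsto.mono_left ?_ nhdsWithin_le_nhds
    refine ENNReal.Tendsto.mul_const ?_ (Or.inl (by simp))
    exact (ENNReal.continuous_coe.comp (by fun_prop : Continuous fun δ : ℝ≥0 => 1 + δ)).tendsto 0
  have := ge_of_tendsto hlim (by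
    filter_upwards [self_mem_nhdsWithin] with δ hδ
    exact key δ hδ)
  simpa using this

section
set_option linter.unusedSectionVars false
variable {r : ℕ} {H : Type} [NormedAddCommGroup H] [InnerProductSpace ℂ H]

lemma inner_shift (h g f : Lp H 2 (torusMeasure r)) (m : Fin r → ℤ)
    (hf : ⇑f =ᵐ[torusMeasure r] fun σ => char m σ • g σ) :
    (inner ℂ h f : ℂ) = ∫ σ, char m σ * inner ℂ (h σ) (g σ) ∂(torusMeasure r) := by
  rw [MeasureTheory.L2.inner_def]
  refine integral_congr_ae ?_
  filter_upwards [hf] with σ hσ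
  rw [hσ, inner_smul_right]

lemma nnnorm_sq_eq (h : Lp H 2 (torusMeasure r)) :
    (‖h‖₊ : ℝ≥0∞) ^ 2 = ∫⁻ σ, (‖h σ‖₊ : ℝ≥0∞) ^ 2 ∂(torusMeasure r) := by
  have : (‖h‖₊ : ℝ≥0∞) = eLpNorm h 2 (torusMeasure r) := Lp.enorm_def h
  rw [this, eLpNorm_eq_lintegral_rpow_enorm_toReal (by norm_num) (by norm_num)]
  rw [← ENNReal.rpow_natCast, ← ENNReal.rpow_mul]
  simp
  rfl

lemma sum_eq {I : Type} [Countable I] (g : I → Lp H 2 (torusMeasure r))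
    (f : I × (Fin r → ℤ) → Lp H 2 (torusMeasure r))
    (hf : ∀ (i : I) (m : Fin r → ℤ),
      ⇑(f (i, m)) =ᵐ[torusMeasure r] fun σ => char m σ • ⇑(g i) σ)
    (h : Lp H 2 (torusMeasure r))
    (hm : ∀ i, MemLp (fun σ => (inner ℂ (h σ) (g i σ) : ℂ)) 2 (torusMeasure r)) :
    ∑' p : I × (Fin r → ℤ), (‖(inner ℂ h (f p) : ℂ)‖₊ : ℝ≥0∞) ^ 2 =
      ∫⁻ σ, ∑' i : I, (‖(inner ℂ (h σ) (g i σ) : ℂ)‖₊ : ℝ≥0∞) ^ 2 ∂(torusMeasure r) := by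
  rw [ENNReal.tsum_prod', lintegral_tsum]
  · refine tsum_congr fun i => ?_
    rw [← parseval_cube r _ (hm i)]
    refine tsum_congr fun m => ?_
    rw [inner_shift h (g i) (f (i, m)) m (hf i m)]
  · exact fun i => (hm i).1.enorm.pow_const 2

lemma mem_fiber {I : Type} [Countable I] (g : I → Lp H 2 (torusMeasure r))
    (f : I × (Fin r → ℤ) → Lp H 2 (torusMeasure r))
    (hf : ∀ (i : I) (m : Fin r → ℤ),
      ⇑(f (i, m)) =ᵐ[torusMeasure r] fun σ => char m σ • ⇑(g i) σ)
    (h : Lp H 2 (torusMeasure r))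
    (hh : h ∈ (Submodule.span ℂ (Set.range f)).topologicalClosure) :
    ∀ᵐ σ ∂(torusMeasure r),
      h σ ∈ (Submodule.span ℂ (Set.range fun i => ⇑(g i) σ)).topologicalClosure := by
  have hspan : ∀ k ∈ Submodule.span ℂ (Set.range f), ∀ᵐ σ ∂(torusMeasure r),
      k σ ∈ Submodule.span ℂ (Set.range fun i => ⇑(g i) σ) := by
    intro k hk
    induction hk using Submodule.span_induction with
    | mem k hk =>
      obtain ⟨⟨i, m⟩, rfl⟩ := hk
      filter_upwards [hf i m] with σ hσ
      rw [hσ]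
      exact Submodule.smul_mem _ _ (Submodule.subset_span ⟨i, rfl⟩)
    | zero =>
      filter_upwards [Lp.coeFn_zero H 2 (torusMeasure r)] with σ hσ
      rw [hσ]
      exact Submodule.zero_mem _
    | add k l _ _ hk hl =>
      filter_upwards [hk, hl, Lp.coeFn_add k l] with σ h1 h2 h3
      rw [h3]
      exact Submodule.add_mem _ h1 h2
    | smul c k _ hk =>
      filter_upwards [hk, Lp.coeFn_smul c k] with σ h1 h3
      rw [h3]
      exact Submodule.smul_mem _ _ h1
  obtain ⟨u, hu, hlim⟩ := mem_closure_iff_seq_limit.1 hh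
  obtain ⟨ns, -, hns⟩ := (tendstoInMeasure_of_tendsto_Lp hlim).exists_seq_tendsto_ae
  filter_upwards [hns, ae_all_iff.2 fun n => hspan (u n) (hu n)] with σ h1 h2
  exact mem_closure_of_tendsto h1 (Filter.Eventually.of_forall fun n => h2 (ns n))

lemma indicator_mem [CompleteSpace H] {I : Type} [Countable I] (g : I → Lp H 2 (torusMeasure r))
    (f : I × (Fin r → ℤ) → Lp H 2 (torusMeasure r))
    (hf : ∀ (i : I) (m : Fin r → ℤ),
      ⇑(f (i, m)) =ᵐ[torusMeasure r] fun σ => char m σ • ⇑(g i) σ)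
    (h : Lp H 2 (torusMeasure r)) (E : Set (Fin r → ℝ)) (t : Finset I) (c : I → ℂ)
    (hh : ⇑h =ᵐ[torusMeasure r] E.indicator fun σ => ∑ i ∈ t, c i • g i σ) :
    h ∈ (Submodule.span ℂ (Set.range f)).topologicalClosure := by
  rw [← Submodule.orthogonal_orthogonal_eq_closure, Submodule.mem_orthogonal]
  intro k hk
  have h0 : ∀ i, (fun σ => (inner ℂ (k σ) (g i σ) : ℂ)) =ᵐ[torusMeasure r] 0 := by
    intro i
    refine uniq_cube r _ (L2.integrable_inner k (g i)) fun m => ?_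
    rw [← inner_shift k (g i) (f (i, m)) m (hf i m)]
    have hmem : f (i, m) ∈ Submodule.span ℂ (Set.range f) := Submodule.subset_span ⟨(i, m), rfl⟩
    exact Submodule.inner_left_of_mem_orthogonal hmem hk
  rw [MeasureTheory.L2.inner_def]
  refine integral_eq_zero_of_ae ?_
  filter_upwards [hh, ae_all_iff.2 h0] with σ h1 h2
  rw [h1]
  by_cases hσ : σ ∈ E
  · rw [Set.indicator_of_mem hσ, inner_sum]
    refine Finset.sum_eq_zero fun i _ => ?_
    rw [inner_smul_right]
    have := h2 i
    simp only [Pi.zero_apply] at this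
    rw [this, mul_zero]
  · simp [hσ]

end

lemma span_bounds {r : ℕ} {H : Type} [NormedAddCommGroup H] [InnerProductSpace ℂ H]
    [CompleteSpace H] {I : Type} [Countable I]
    (g : I → Lp H 2 (torusMeasure r))
    (f : I × (Fin r → ℤ) → Lp H 2 (torusMeasure r))
    (hf : ∀ (i : I) (m : Fin r → ℤ),
      ⇑(f (i, m)) =ᵐ[torusMeasure r] fun σ => char m σ • ⇑(g i) σ)
    (A B : ℝ)
    (hfr : ∀ h : Lp H 2 (torusMeasure r),
      h ∈ (Submodule.span ℂ (Set.range f)).topologicalClosure →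
      ENNReal.ofReal A * (‖h‖₊ : ℝ≥0∞) ^ 2 ≤
          ∑' p : I × (Fin r → ℤ), (‖(inner ℂ h (f p) : ℂ)‖₊ : ℝ≥0∞) ^ 2 ∧
        ∑' p : I × (Fin r → ℤ), (‖(inner ℂ h (f p) : ℂ)‖₊ : ℝ≥0∞) ^ 2 ≤
          ENNReal.ofReal B * (‖h‖₊ : ℝ≥0∞) ^ 2)
    (t : Finset I) (c : I → ℂ) : ∀ᵐ σ ∂(torusMeasure r),
        ENNReal.ofReal A * (‖∑ i ∈ t, c i • g i σ‖₊ : ℝ≥0∞) ^ 2 ≤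
          ∑' i : I, (‖(inner ℂ (∑ i ∈ t, c i • g i σ) (g i σ) : ℂ)‖₊ : ℝ≥0∞) ^ 2 ∧
        ∑' i : I, (‖(inner ℂ (∑ i ∈ t, c i • g i σ) (g i σ) : ℂ)‖₊ : ℝ≥0∞) ^ 2 ≤
          ENNReal.ofReal B * (‖∑ i ∈ t, c i • g i σ‖₊ : ℝ≥0∞) ^ 2 := by
  set x : (Fin r → ℝ) → H := fun σ => ∑ i ∈ t, c i • g i σ with hxdef
  have hxL : MemLp x 2 (torusMeasure r) :=
    memLp_finsetSum t fun i _ => (Lp.memLp (g i)).const_smul (c i)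
  have hxm : StronglyMeasurable x :=
    Finset.stronglyMeasurable_fun_sum t fun i _ => (Lp.stronglyMeasurable (g i)).const_smul (c i)
  let EN : ℕ → Set (Fin r → ℝ) := fun N => {σ | ‖x σ‖ ≤ N}
  have hEN : ∀ N, MeasurableSet (EN N) := fun N => measurableSet_le hxm.norm.measurable
    measurable_const
  have hms : Measurable fun σ => ∑' i : I, (‖(inner ℂ (x σ) (g i σ) : ℂ)‖₊ : ℝ≥0∞) ^ 2 :=
    Measurable.tsum fun i =>
      ((hxm.inner (𝕜 := ℂ) (Lp.stronglyMeasurable (g i))).enorm).pow_const 2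
  have hmx : Measurable fun σ => (‖x σ‖₊ : ℝ≥0∞) ^ 2 := hxm.enorm.pow_const 2
  have key : ∀ (N : ℕ) (E : Set (Fin r → ℝ)), MeasurableSet E →
      ENNReal.ofReal A * ∫⁻ σ in E ∩ EN N, (‖x σ‖₊ : ℝ≥0∞) ^ 2 ∂(torusMeasure r) ≤
        ∫⁻ σ in E ∩ EN N, ∑' i : I, (‖(inner ℂ (x σ) (g i σ) : ℂ)‖₊ : ℝ≥0∞) ^ 2
          ∂(torusMeasure r) ∧
      ∫⁻ σ in E ∩ EN N, ∑' i : I, (‖(inner ℂ (x σ) (g i σ) : ℂ)‖₊ : ℝ≥0∞) ^ 2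
          ∂(torusMeasure r) ≤
        ENNReal.ofReal B * ∫⁻ σ in E ∩ EN N, (‖x σ‖₊ : ℝ≥0∞) ^ 2 ∂(torusMeasure r) := by
    intro N E hE
    have hF : MeasurableSet (E ∩ EN N) := hE.inter (hEN N)
    have hhL : MemLp ((E ∩ EN N).indicator x) 2 (torusMeasure r) := hxL.indicator hF
    have hco := hhL.coeFn_toLp
    have hm : ∀ i, MemLp (fun σ => (inner ℂ (hhL.toLp _ σ) (g i σ) : ℂ)) 2
        (torusMeasure r) := by
      intro i
      refine (Lp.memLp (g i)).of_le_mul (c := N)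
        ((Lp.aestronglyMeasurable _).inner (Lp.aestronglyMeasurable (g i))) ?_
      filter_upwards [hco] with σ hσ
      rw [hσ]
      refine (norm_inner_le_norm _ _).trans ?_
      gcongr
      by_cases hs : σ ∈ E ∩ EN N
      · rw [Set.indicator_of_mem hs]
        exact hs.2
      · simp [hs]
    have h1 := hfr (hhL.toLp _) (indicator_mem g f hf _ (E ∩ EN N) t c hco)
    rw [sum_eq g f hf _ hm, nnnorm_sq_eq] at h1
    have e1 : ∫⁻ σ, (‖hhL.toLp _ σ‖₊ : ℝ≥0∞) ^ 2 ∂(torusMeasure r) =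
        ∫⁻ σ in E ∩ EN N, (‖x σ‖₊ : ℝ≥0∞) ^ 2 ∂(torusMeasure r) := by
      rw [← lintegral_indicator hF]
      refine lintegral_congr_ae ?_
      filter_upwards [hco] with σ hσ
      rw [hσ]
      by_cases hs : σ ∈ E ∩ EN N
      · rw [Set.indicator_of_mem hs, Set.indicator_of_mem hs]
      · rw [Set.indicator_of_notMem hs, Set.indicator_of_notMem hs]
        simp
    have e2 : ∫⁻ σ, ∑' i : I, (‖(inner ℂ (hhL.toLp _ σ) (g i σ) : ℂ)‖₊ : ℝ≥0∞) ^ 2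
          ∂(torusMeasure r) =
        ∫⁻ σ in E ∩ EN N, ∑' i : I, (‖(inner ℂ (x σ) (g i σ) : ℂ)‖₊ : ℝ≥0∞) ^ 2
          ∂(torusMeasure r) := by
      rw [← lintegral_indicator hF]
      refine lintegral_congr_ae ?_
      filter_upwards [hco] with σ hσ
      rw [hσ]
      by_cases hs : σ ∈ E ∩ EN N
      · rw [Set.indicator_of_mem hs, Set.indicator_of_mem hs]
      · rw [Set.indicator_of_notMem hs, Set.indicator_of_notMem hs]
        simp
    rw [e1, e2] at h1
    exact h1
  haveI : SigmaFinite (torusMeasure r) := by unfold torusMeasure; infer_instance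
  have hN : ∀ N : ℕ, ∀ᵐ σ ∂(torusMeasure r), σ ∈ EN N →
      ENNReal.ofReal A * (‖x σ‖₊ : ℝ≥0∞) ^ 2 ≤
          ∑' i : I, (‖(inner ℂ (x σ) (g i σ) : ℂ)‖₊ : ℝ≥0∞) ^ 2 ∧
        ∑' i : I, (‖(inner ℂ (x σ) (g i σ) : ℂ)‖₊ : ℝ≥0∞) ^ 2 ≤
          ENNReal.ofReal B * (‖x σ‖₊ : ℝ≥0∞) ^ 2 := by
    intro N
    rw [← ae_restrict_iff' (hEN N)]
    refine Filter.Eventually.and ?_ ?_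
    · refine ae_le_of_forall_setLIntegral_le_of_sigmaFinite (hmx.const_mul _) fun E hE _ => ?_
      rw [Measure.restrict_restrict hE, lintegral_const_mul _ hmx]
      exact (key N E hE).1
    · refine ae_le_of_forall_setLIntegral_le_of_sigmaFinite hms fun E hE _ => ?_
      rw [Measure.restrict_restrict hE, lintegral_const_mul _ hmx]
      exact (key N E hE).2
  filter_upwards [ae_all_iff.2 hN] with σ hσ
  obtain ⟨N, hNN⟩ := exists_nat_ge ‖x σ‖
  exact hσ N hNN

/-- **Characterization of frames (transform side).** The family `{f_{i,m}}`,
`f_{i,m}(σ) = e_m(σ) g_i(σ)`, is a frame with constants `A, B` for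
`S = closed span {f_{i,m}}` iff for a.e. `σ` the family `{g_i(σ)}` is a frame with the same
constants for `J(σ) = closed span {g_i(σ)}`. -/
theorem frame_characterization (r : ℕ) (hr : 0 < r)
    {H : Type} [NormedAddCommGroup H] [InnerProductSpace ℂ H] [CompleteSpace H]
    [TopologicalSpace.SeparableSpace H]
    {I : Type} [Countable I]
    (g : I → Lp H 2 (torusMeasure r))
    (f : I × (Fin r → ℤ) → Lp H 2 (torusMeasure r))
    (hf : ∀ (i : I) (m : Fin r → ℤ),
      ⇑(f (i, m)) =ᵐ[torusMeasure r] fun σ => char m σ • ⇑(g i) σ)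
    (A B : ℝ) (hA : 0 < A) (hAB : A ≤ B) :
    (∀ h : Lp H 2 (torusMeasure r),
      h ∈ (Submodule.span ℂ (Set.range f)).topologicalClosure →
      ENNReal.ofReal A * (‖h‖₊ : ℝ≥0∞) ^ 2 ≤
          ∑' p : I × (Fin r → ℤ), (‖(inner ℂ h (f p) : ℂ)‖₊ : ℝ≥0∞) ^ 2 ∧
        ∑' p : I × (Fin r → ℤ), (‖(inner ℂ h (f p) : ℂ)‖₊ : ℝ≥0∞) ^ 2 ≤
          ENNReal.ofReal B * (‖h‖₊ : ℝ≥0∞) ^ 2) ↔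
    (∀ᵐ σ ∂(torusMeasure r), ∀ x : H,
      x ∈ (Submodule.span ℂ (Set.range fun i => ⇑(g i) σ)).topologicalClosure →
      ENNReal.ofReal A * (‖x‖₊ : ℝ≥0∞) ^ 2 ≤
          ∑' i : I, (‖(inner ℂ x (⇑(g i) σ) : ℂ)‖₊ : ℝ≥0∞) ^ 2 ∧
        ∑' i : I, (‖(inner ℂ x (⇑(g i) σ) : ℂ)‖₊ : ℝ≥0∞) ^ 2 ≤
          ENNReal.ofReal B * (‖x‖₊ : ℝ≥0∞) ^ 2) := by
  constructor
  · intro hfr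
    have hx : ∀ (t : Finset I) (c : I → ℂ), ∀ᵐ σ ∂(torusMeasure r),
        ENNReal.ofReal A * (‖∑ i ∈ t, c i • g i σ‖₊ : ℝ≥0∞) ^ 2 ≤
          ∑' i : I, (‖(inner ℂ (∑ i ∈ t, c i • g i σ) (g i σ) : ℂ)‖₊ : ℝ≥0∞) ^ 2 ∧
        ∑' i : I, (‖(inner ℂ (∑ i ∈ t, c i • g i σ) (g i σ) : ℂ)‖₊ : ℝ≥0∞) ^ 2 ≤
          ENNReal.ofReal B * (‖∑ i ∈ t, c i • g i σ‖₊ : ℝ≥0∞) ^ 2 := by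
      intro t c
      exact span_bounds g f hf A B hfr t c
    filter_upwards [ae_all_iff.2 fun t : Finset I => ae_all_iff.2 fun n : ℕ =>
      hx t (TopologicalSpace.denseSeq (I → ℂ) n)] with σ hσ x hxm
    exact fiber_ext (fun i => g i σ) A B (TopologicalSpace.denseSeq (I → ℂ))
      (TopologicalSpace.denseRange_denseSeq _) hσ x hxm
  · intro hfib h hh
    have hb : ∀ᵐ σ ∂(torusMeasure r), ENNReal.ofReal A * (‖h σ‖₊ : ℝ≥0∞) ^ 2 ≤
          ∑' i : I, (‖(inner ℂ (h σ) (⇑(g i) σ) : ℂ)‖₊ : ℝ≥0∞) ^ 2 ∧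
        ∑' i : I, (‖(inner ℂ (h σ) (⇑(g i) σ) : ℂ)‖₊ : ℝ≥0∞) ^ 2 ≤
          ENNReal.ofReal B * (‖h σ‖₊ : ℝ≥0∞) ^ 2 := by
      filter_upwards [hfib, mem_fiber g f hf h hh] with σ h1 h2
      exact h1 _ h2
    have hB : 0 ≤ B := hA.le.trans hAB
    have hm : ∀ i, MemLp (fun σ => (inner ℂ (h σ) (g i σ) : ℂ)) 2 (torusMeasure r) := by
      intro i
      refine (Lp.memLp h).of_le_mul (c := √B)
        ((Lp.aestronglyMeasurable h).inner (Lp.aestronglyMeasurable (g i))) ?_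
      filter_upwards [hb] with σ hσ
      have h1 := (ENNReal.le_tsum i).trans hσ.2
      have h2 : ‖(inner ℂ (h σ) (g i σ) : ℂ)‖ ^ 2 ≤ B * ‖h σ‖ ^ 2 := by
        have h3 := ENNReal.toReal_mono (by finiteness) h1
        simpa [ENNReal.toReal_mul, ENNReal.toReal_ofReal hB] using h3
      refine le_of_sq_le_sq ?_ (by positivity)
      rwa [mul_pow, Real.sq_sqrt hB]
    rw [sum_eq g f hf h hm, nnnorm_sq_eq h, ← lintegral_const_mul' _ _ ENNReal.ofReal_ne_top,
      ← lintegral_const_mul' _ _ ENNReal.ofReal_ne_top]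
    exact ⟨lintegral_mono_ae (hb.mono fun _ h => h.1), lintegral_mono_ae (hb.mono fun _ h => h.2)⟩
end
end
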